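/- (Counterexamples to Kippenhahn's conjecture in all even sizes ≥ 8.) For every n ≥ 4 there exist real symmetric matrices H, K : Matrix (Fin (2*n)) (Fin (2*n)) ℝ (Hᵀ = H and Kᵀ = K) such that: (a) for all x, y : ℝ there exists a monic polynomial g ∈ Polynomial ℝ with (x • H + y • K).charpoly = g ^ 2 (so every eigenvalue of every real linear combination x H + y K has even multiplicity); and yet (b) the complexifications H' := H.map (algebraMap ℝ ℂ) and K' := K.map (algebraMap ℝ ℂ) generate the full matrix algebra: Algebra.adjoin ℂ {H', K'} = ⊤ in Matrix (Fin (2*n)) (Fin (2*n)) ℂ. -/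

import Mathlib

open Matrix

lemma kip_real_sq (c : Polynomial ℝ) (hc : c.Monic) (q : Polynomial ℂ)
    (h : c.map (algebraMap ℝ ℂ) = q ^ 2) : ∃ g : Polynomial ℝ, g.Monic ∧ c = g ^ 2 := by
  have hlc : q.leadingCoeff ^ 2 = 1 := by
    rw [← Polynomial.leadingCoeff_pow, ← h]
    exact hc.map _
  obtain ⟨r, hr, hrq⟩ : ∃ r : Polynomial ℂ, r.Monic ∧ c.map (algebraMap ℝ ℂ) = r ^ 2 := by
    rcases sq_eq_sq_iff_eq_or_eq_neg.mp (hlc.trans (one_pow 2).symm) with h1 | h1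
    · exact ⟨q, h1, h⟩
    · exact ⟨-q, by simp [Polynomial.Monic, h1], by rw [h]; ring⟩
  have hconj : r.map (starRingEnd ℂ) = r := by
    have h2 : (r.map (starRingEnd ℂ)) ^ 2 = r ^ 2 := by
      rw [← Polynomial.map_pow, ← hrq, Polynomial.map_map]
      congr 1
      ext x
      simp
    rcases sq_eq_sq_iff_eq_or_eq_neg.mp h2 with h3 | h3
    · exact h3
    · exfalso
      have h4 := congrArg Polynomial.leadingCoeff h3
      rw [(hr.map _).leadingCoeff, Polynomial.leadingCoeff_neg, hr.leadingCoeff] at h4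
      norm_num at h4
  have hl : r ∈ Polynomial.lifts (algebraMap ℝ ℂ) := by
    rw [Polynomial.lifts_iff_coeff_lifts]
    intro k
    have h5 := congrArg (fun p => Polynomial.coeff p k) hconj
    simp only [Polynomial.coeff_map] at h5
    exact ⟨(r.coeff k).re, Complex.conj_eq_iff_re.mp h5⟩
  obtain ⟨g, hg, -, hgm⟩ := Polynomial.lifts_and_degree_eq_and_monic hl hr
  refine ⟨g, hgm, ?_⟩
  apply Polynomial.map_injective (algebraMap ℝ ℂ) (algebraMap ℝ ℂ).injective
  rw [hrq, Polynomial.map_pow, hg]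

section det
variable {R : Type*} [CommRing R] {m r : Type*} [Fintype m] [DecidableEq m] [Fintype r] [DecidableEq r]

lemma kip_det_cplx (i : R) (hi : i * i = -1) (P Q : Matrix m m R) :
    (fromBlocks P (-Q) Q P).det = (P + i • Q).det * (P - i • Q).det := by
  have h : fromBlocks 1 0 (i • 1) 1 * fromBlocks P (-Q) Q P * fromBlocks 1 0 (-(i • 1)) 1
      = fromBlocks (P + i • Q) (-Q) 0 (P - i • Q) := by
    simp only [fromBlocks_multiply]
    congr 1
    · simp
    · simp
    · simp [smul_smul, hi]
      abel
    · simp [sub_eq_add_neg, add_comm]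
  have h2 := congrArg det h
  simpa [det_mul, det_fromBlocks_zero₁₂, det_fromBlocks_zero₂₁] using h2

lemma kip_det_schur (l : R) (M : Matrix m r R) (Y : Matrix m m R) :
    (fromBlocks (l • (1 : Matrix r r R)) (-Mᵀ) (-M) Y).det * l ^ Fintype.card m
      = l ^ Fintype.card r * (l • Y - M * Mᵀ).det := by
  have h : fromBlocks (l • (1 : Matrix r r R)) (-Mᵀ) (-M) Y * fromBlocks 1 Mᵀ 0 (l • 1)
      = fromBlocks (l • 1) 0 (-M) (l • Y - M * Mᵀ) := by
    simp only [fromBlocks_multiply]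
    congr 1 <;> simp [sub_eq_add_neg, add_comm]
  have h2 := congrArg det h
  simpa [det_mul, det_fromBlocks_zero₁₂, det_fromBlocks_zero₂₁] using h2
end det

section defs
variable {R : Type*} [CommRing R] {m r : Type*} [Fintype m] [DecidableEq m] [Fintype r] [DecidableEq r]

def kipH (G : Matrix m r R) (h : Matrix m m R) : Matrix ((r ⊕ r) ⊕ (m ⊕ m)) ((r ⊕ r) ⊕ (m ⊕ m)) R :=
  fromBlocks 0 (fromBlocks G 0 0 G)ᵀ (fromBlocks G 0 0 G) (fromBlocks h 0 0 h)

def kipK (C : Matrix m r R) (k : Matrix m m R) : Matrix ((r ⊕ r) ⊕ (m ⊕ m)) ((r ⊕ r) ⊕ (m ⊕ m)) R :=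
  fromBlocks 0 (fromBlocks 0 C C 0)ᵀ (fromBlocks 0 C C 0) (fromBlocks 0 (-k) k 0)

end defs

set_option maxHeartbeats 1000000 in
lemma kip_sq_complex {m r : Type*} [Fintype m] [DecidableEq m] [Fintype r] [DecidableEq r]
    (G C : Matrix m r ℂ) (h k : Matrix m m ℂ) (hh : hᵀ = h) (hk : kᵀ = -k)
    (h1 : C * Cᵀ = G * Gᵀ) (h2 : G * Cᵀ + C * Gᵀ = 0) (x y : ℂ) :
    ∃ q : Polynomial ℂ, (x • kipH G h + y • kipK C k).charpoly = q ^ 2 := by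
  let φ : ℂ →+* Polynomial ℂ := Polynomial.C
  let M : Matrix (m ⊕ m) (r ⊕ r) (Polynomial ℂ) :=
    fromBlocks ((x • G).map φ) ((y • C).map φ) ((y • C).map φ) ((x • G).map φ)
  let Y : Matrix (m ⊕ m) (m ⊕ m) (Polynomial ℂ) :=
    fromBlocks ((Polynomial.X : Polynomial ℂ) • 1 - (x • h).map φ) ((y • k).map φ) (-(y • k).map φ)
      ((Polynomial.X : Polynomial ℂ) • 1 - (x • h).map φ)
  have hc : charmatrix (x • kipH G h + y • kipK C k)
      = fromBlocks ((Polynomial.X : Polynomial ℂ) • (1 : Matrix (r ⊕ r) (r ⊕ r) _)) (-Mᵀ) (-M) Y := by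
    have hs : ∀ (A : Matrix m m ℂ), charmatrix A = (Polynomial.X : Polynomial ℂ) • 1 - A.map φ := by
      intro A; simp [charmatrix, φ, Matrix.smul_one_eq_diagonal]
    simp only [kipH, kipK, fromBlocks_smul, fromBlocks_add, charmatrix_fromBlocks, fromBlocks_transpose, hs]
    congr 1
    · simp [charmatrix, Matrix.smul_one_eq_diagonal]
    · ext i j; rcases i with i | i <;> rcases j with j | j <;> simp [M, φ]
    · ext i j; rcases i with i | i <;> rcases j with j | j <;> simp [M, φ]
    · simp only [Y, smul_zero, add_zero, zero_add]
      congr 1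
      ext i j; simp [φ]
  let P : Matrix m m (Polynomial ℂ) := (Polynomial.X : Polynomial ℂ) •
      ((Polynomial.X : Polynomial ℂ) • (1 : Matrix m m (Polynomial ℂ)) - (x • h).map φ)
      - (φ (x ^ 2 + y ^ 2)) • (G * Gᵀ).map φ
  let Q : Matrix m m (Polynomial ℂ) := -(Polynomial.X : Polynomial ℂ) • (y • k).map φ
  have e : (Polynomial.X : Polynomial ℂ) • Y - M * Mᵀ = fromBlocks P (-Q) Q P := by
    have eM : M * Mᵀ = fromBlocks ((φ (x ^ 2 + y ^ 2)) • (G * Gᵀ).map φ) 0 0 ((φ (x ^ 2 + y ^ 2)) • (G * Gᵀ).map φ) := by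
      have a1 : (x • G).map φ * ((x • G).map φ)ᵀ + (y • C).map φ * ((y • C).map φ)ᵀ
          = (φ (x ^ 2 + y ^ 2)) • (G * Gᵀ).map φ := by
        rw [← Matrix.transpose_map, ← Matrix.transpose_map, ← Matrix.map_mul, ← Matrix.map_mul]
        simp only [transpose_smul, Matrix.smul_mul, Matrix.mul_smul, h1]
        generalize G * Gᵀ = D
        ext1 i j
        simp only [φ, Matrix.map_apply, Matrix.add_apply, Matrix.smul_apply, smul_eq_mul, map_add, map_mul, map_pow]
        ring
      have a2 : (x • G).map φ * ((y • C).map φ)ᵀ + (y • C).map φ * ((x • G).map φ)ᵀ = 0 := by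
        rw [← Matrix.transpose_map, ← Matrix.transpose_map, ← Matrix.map_mul, ← Matrix.map_mul]
        have : (x • G) * (y • C)ᵀ + (y • C) * (x • G)ᵀ = 0 := by
          simp only [transpose_smul, Matrix.smul_mul, Matrix.mul_smul]
          rw [smul_comm y x, ← smul_add, ← smul_add, h2]; simp
        rw [← Matrix.map_add _ (by simp), this]
        simp
      simp only [M, fromBlocks_transpose, fromBlocks_multiply]
      have a3 := (add_comm _ _).trans a1
      have a4 := (add_comm _ _).trans a2
      rw [a1, a2, a3, a4]
    rw [eM]
    simp only [Y, fromBlocks_smul, sub_eq_add_neg, fromBlocks_neg, fromBlocks_add]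
    congr 1 <;> simp [Q]
  have hPQ : (P - (Polynomial.C Complex.I) • Q).det = (P + (Polynomial.C Complex.I) • Q).det := by
    rw [← det_transpose]
    congr 1
    have hP : Pᵀ = P := by
      simp only [P, transpose_sub, transpose_smul, transpose_one, ← Matrix.transpose_map, hh, transpose_mul, transpose_transpose]
    have hQ : Qᵀ = -Q := by
      simp only [Q, transpose_smul, ← Matrix.transpose_map, hk]
      ext1 i j
      simp only [φ, Matrix.map_apply, Matrix.smul_apply, smul_eq_mul, Matrix.neg_apply, map_mul, map_neg]
      ring
    rw [transpose_sub, transpose_smul, hP, hQ]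
    simp
  have hI : Polynomial.C Complex.I * Polynomial.C Complex.I = (-1 : Polynomial ℂ) := by
    rw [← Polynomial.C_mul, Complex.I_mul_I]; simp
  have key := kip_det_schur (Polynomial.X : Polynomial ℂ) M Y
  rw [e, kip_det_cplx _ hI, hPQ, ← hc] at key
  change (x • kipH G h + y • kipK C k).charpoly * _ = _ at key
  simp only [Fintype.card_sum] at key
  set d := (P + (Polynomial.C Complex.I) • Q).det
  have key2 : (x • kipH G h + y • kipK C k).charpoly * (Polynomial.X ^ Fintype.card m) ^ 2
      = (Polynomial.X ^ (Fintype.card r) * d) ^ 2 := by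
    rw [← pow_mul, mul_two, key]; ring
  have hd : (Polynomial.X : Polynomial ℂ) ^ Fintype.card m ∣ Polynomial.X ^ (Fintype.card r) * d :=
    (IsIntegrallyClosed.pow_dvd_pow_iff (two_ne_zero)).mp ⟨_, by rw [← key2, mul_comm]⟩
  obtain ⟨q, hq⟩ := hd
  refine ⟨q, ?_⟩
  rw [hq, mul_pow, mul_comm] at key2
  exact mul_left_cancel₀ (pow_ne_zero _ (pow_ne_zero _ Polynomial.X_ne_zero)) key2

/-- A symmetric generating set whose algebra contains a cyclic rank one matrix generates everything. -/
lemma kip_adjoin_top {ι : Type*} [Fintype ι] [DecidableEq ι] (H K : Matrix ι ι ℂ)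
    (hH : Hᵀ = H) (hK : Kᵀ = K) (v : ι → ℂ)
    (hv : vecMulVec v v ∈ Algebra.adjoin ℂ {H, K})
    (hU : ∀ U : Submodule ℂ (ι → ℂ), v ∈ U → (∀ u ∈ U, H *ᵥ u ∈ U) → (∀ u ∈ U, K *ᵥ u ∈ U) → U = ⊤) :
    Algebra.adjoin ℂ {H, K} = ⊤ := by
  set A := Algebra.adjoin ℂ {H, K} with hA
  have hHA : H ∈ A := Algebra.subset_adjoin (by simp)
  have hKA : K ∈ A := Algebra.subset_adjoin (by simp)
  let U : Submodule ℂ (ι → ℂ) :=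
    { carrier := {u | vecMulVec u v ∈ A}
      add_mem' := fun {a b} ha hb => by
        simp only [Set.mem_ofPred_eq, add_vecMulVec] at *; exact A.add_mem ha hb
      zero_mem' := by simp only [Set.mem_ofPred_eq, zero_vecMulVec]; exact A.zero_mem
      smul_mem' := fun c a ha => by
        simp only [Set.mem_ofPred_eq, smul_vecMulVec] at *; exact A.smul_mem ha c }
  have h1 : U = ⊤ := hU U hv
    (fun u hu => by
      change vecMulVec _ _ ∈ A; rw [← mul_vecMulVec]; exact A.mul_mem hHA hu)
    (fun u hu => by
      change vecMulVec _ _ ∈ A; rw [← mul_vecMulVec]; exact A.mul_mem hKA hu)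
  let W : Submodule ℂ (ι → ℂ) :=
    { carrier := {w | ∀ u, vecMulVec u w ∈ A}
      add_mem' := fun {a b} ha hb u => by
        rw [vecMulVec_add]; exact A.add_mem (ha u) (hb u)
      zero_mem' := fun u => by rw [vecMulVec_zero]; exact A.zero_mem
      smul_mem' := fun c a ha u => by
        rw [vecMulVec_smul]; exact A.smul_mem (ha u) c }
  have hsym : ∀ (M : Matrix ι ι ℂ), Mᵀ = M → ∀ w, M *ᵥ w = w ᵥ* M := by
    intro M hM w
    conv_lhs => rw [← hM, mulVec_transpose]
  have h2 : W = ⊤ := hU W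
    (fun u => by
      have : u ∈ U := by rw [h1]; trivial
      exact this)
    (fun w hw u => by
      rw [hsym H hH, ← vecMulVec_mul]; exact A.mul_mem (hw u) hHA)
    (fun w hw u => by
      rw [hsym K hK, ← vecMulVec_mul]; exact A.mul_mem (hw u) hKA)
  rw [eq_top_iff]
  intro M _
  rw [matrix_eq_sum_single M]
  refine A.sum_mem fun i _ => A.sum_mem fun j _ => ?_
  have h3 : (Pi.single j 1 : ι → ℂ) ∈ W := by rw [h2]; trivial
  have h4 := A.smul_mem (h3 (Pi.single i 1)) (M i j)
  rw [← single_eq_single_vecMulVec_single, smul_single] at h4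
  simpa using h4

section concrete
variable (R : Type*) [CommRing R] (k : ℕ)

def kG : Matrix (Fin (k+2)) (Fin 2) R :=
  of fun i j => if i.val = 0 ∧ j.val = 0 then 1 else if i.val = 1 ∧ j.val = 1 then 2 else 0
def kC : Matrix (Fin (k+2)) (Fin 2) R :=
  of fun i j => if i.val = 0 ∧ j.val = 1 then 1 else if i.val = 1 ∧ j.val = 0 then -2 else 0
def kh : Matrix (Fin (k+2)) (Fin (k+2)) R :=
  of fun i j => if i.val ≤ 1 ∧ j.val ≤ 1 then (if i.val = j.val then 1 else 2) else 0
def kk : Matrix (Fin (k+2)) (Fin (k+2)) R :=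
  of fun i j => if i.val = j.val + 1 then 1 else if j.val = i.val + 1 then -1 else 0

def kφ (j : ℕ) : Fin 2 → R := fun i => if i.val = j then 1 else 0
def kε (j : ℕ) : Fin (k+2) → R := fun i => if i.val = j then 1 else 0

lemma kG_C : kC R k * (kC R k)ᵀ = kG R k * (kG R k)ᵀ := by
  ext i j
  simp [mul_apply, kC, kG, Fin.sum_univ_two]
  split_ifs <;> simp_all
lemma kG_C' : kG R k * (kC R k)ᵀ + kC R k * (kG R k)ᵀ = 0 := by
  ext i j
  simp [mul_apply, kC, kG, Fin.sum_univ_two]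
  split_ifs <;> simp_all
lemma kh_symm : (kh R k)ᵀ = kh R k := by
  ext i j
  simp [kh, and_comm, eq_comm]
lemma kk_symm : (kk R k)ᵀ = -kk R k := by
  ext i j
  simp only [kk, transpose_apply, of_apply, Matrix.neg_apply]
  split_ifs <;> first | omega | simp
variable {k}
lemma mulVec_kε {α : Type*} (A : Matrix α (Fin (k+2)) R) {j : ℕ} (hj : j < k + 2) :
    A *ᵥ kε R k j = A.col ⟨j, hj⟩ := by
  have : kε R k j = Pi.single ⟨j, hj⟩ 1 := by
    ext i; simp [kε, Pi.single_apply, Fin.ext_iff]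
  rw [this, mulVec_single_one]
lemma mulVec_kφ {α : Type*} (A : Matrix α (Fin 2) R) {j : ℕ} (hj : j < 2) :
    A *ᵥ kφ R j = A.col ⟨j, hj⟩ := by
  have : kφ R j = Pi.single ⟨j, hj⟩ 1 := by
    ext i; simp [kφ, Pi.single_apply, Fin.ext_iff]
  rw [this, mulVec_single_one]
variable (k)
lemma kG0 : kG R k *ᵥ kφ R 0 = kε R k 0 := by
  rw [mulVec_kφ R _ (by omega)]; ext i; simp [kG, kε]
lemma kG1 : kG R k *ᵥ kφ R 1 = (2:R) • kε R k 1 := by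
  rw [mulVec_kφ R _ (by omega)]; ext i; simp [kG, kε]
lemma kC0 : kC R k *ᵥ kφ R 0 = (-2:R) • kε R k 1 := by
  rw [mulVec_kφ R _ (by omega)]; ext i; simp [kC, kε]
lemma kC1 : kC R k *ᵥ kφ R 1 = kε R k 0 := by
  rw [mulVec_kφ R _ (by omega)]; ext i; simp [kC, kε]
lemma kGt0 : (kG R k)ᵀ *ᵥ kε R k 0 = kφ R 0 := by
  rw [mulVec_kε R _ (by omega)]; ext i; simp [kG, kφ]
lemma kGt1 : (kG R k)ᵀ *ᵥ kε R k 1 = (2:R) • kφ R 1 := by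
  rw [mulVec_kε R _ (by omega)]; ext i; simp [kG, kφ]
lemma kGt2 (j : ℕ) (hj : j + 2 < k + 2) : (kG R k)ᵀ *ᵥ kε R k (j+2) = 0 := by
  rw [mulVec_kε R _ hj]; ext i; simp [kG]
lemma kCt0 : (kC R k)ᵀ *ᵥ kε R k 0 = kφ R 1 := by
  rw [mulVec_kε R _ (by omega)]; ext i; simp [kC, kφ]
lemma kCt1 : (kC R k)ᵀ *ᵥ kε R k 1 = (-2:R) • kφ R 0 := by
  rw [mulVec_kε R _ (by omega)]; ext i; simp [kC, kφ]
lemma kCt2 (j : ℕ) (hj : j + 2 < k + 2) : (kC R k)ᵀ *ᵥ kε R k (j+2) = 0 := by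
  rw [mulVec_kε R _ hj]; ext i; simp [kC]
lemma kh0 : kh R k *ᵥ kε R k 0 = kε R k 0 + (2:R) • kε R k 1 := by
  rw [mulVec_kε R _ (by omega)]; ext i
  simp only [kh, kε, col_apply, of_apply, Pi.add_apply, Pi.smul_apply, smul_eq_mul]
  split_ifs <;> first | omega | simp
lemma kh1 : kh R k *ᵥ kε R k 1 = (2:R) • kε R k 0 + kε R k 1 := by
  rw [mulVec_kε R _ (by omega)]; ext i
  simp only [kh, kε, col_apply, of_apply, Pi.add_apply, Pi.smul_apply, smul_eq_mul]
  split_ifs <;> first | omega | simp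
lemma kh2 (j : ℕ) (hj : j + 2 < k + 2) : kh R k *ᵥ kε R k (j+2) = 0 := by
  rw [mulVec_kε R _ hj]; ext i; simp [kh]
lemma kk0 : kk R k *ᵥ kε R k 0 = kε R k 1 := by
  rw [mulVec_kε R _ (by omega)]; ext i; simp [kk, kε]
lemma kk1 (j : ℕ) (hj : j + 1 < k + 2) : kk R k *ᵥ kε R k (j+1) = kε R k (j+2) - kε R k j := by
  rw [mulVec_kε R _ hj]; ext i; simp [kk, kε]
  split_ifs <;> first | omega | simp
end concrete
set_option linter.unusedSimpArgs false

section vectors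
variable (k : ℕ)
abbrev kι := (Fin 2 ⊕ Fin 2) ⊕ (Fin (k+2) ⊕ Fin (k+2))
def kvec (a b : Fin 2 → ℂ) (c d : Fin (k+2) → ℂ) : kι k → ℂ := Sum.elim (Sum.elim a b) (Sum.elim c d)
def kfa (j : ℕ) := kvec k (kφ ℂ j) 0 0 0
def kfb (j : ℕ) := kvec k 0 (kφ ℂ j) 0 0
def kea (j : ℕ) := kvec k 0 0 (kε ℂ k j) 0
def keb (j : ℕ) := kvec k 0 0 0 (kε ℂ k j)
def kHH : Matrix (kι k) (kι k) ℂ := kipH (kG ℂ k) (kh ℂ k)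
def kKK : Matrix (kι k) (kι k) ℂ := kipK (kC ℂ k) (kk ℂ k)

lemma kvec_add (a b c d a' b' c' d') :
    kvec k a b c d + kvec k a' b' c' d' = kvec k (a+a') (b+b') (c+c') (d+d') := by
  ext i; rcases i with (i | i) | (i | i) <;> simp [kvec]
lemma kvec_sub (a b c d a' b' c' d') :
    kvec k a b c d - kvec k a' b' c' d' = kvec k (a-a') (b-b') (c-c') (d-d') := by
  ext i; rcases i with (i | i) | (i | i) <;> simp [kvec]
lemma kvec_smul (t : ℂ) (a b c d) :
    t • kvec k a b c d = kvec k (t • a) (t • b) (t • c) (t • d) := by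
  ext i; rcases i with (i | i) | (i | i) <;> simp [kvec]
lemma kvec_zero : kvec k 0 0 0 0 = 0 := by
  ext i; rcases i with (i | i) | (i | i) <;> simp [kvec]

lemma kHH_vec (a b c d) : kHH k *ᵥ kvec k a b c d =
    kvec k ((kG ℂ k)ᵀ *ᵥ c) ((kG ℂ k)ᵀ *ᵥ d) (kG ℂ k *ᵥ a + kh ℂ k *ᵥ c) (kG ℂ k *ᵥ b + kh ℂ k *ᵥ d) := by
  ext i
  rcases i with (i | i) | (i | i) <;>
    simp [kHH, kipH, kvec, fromBlocks_mulVec, fromBlocks_transpose, Function.comp_def]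
lemma kKK_vec (a b c d) : kKK k *ᵥ kvec k a b c d =
    kvec k ((kC ℂ k)ᵀ *ᵥ d) ((kC ℂ k)ᵀ *ᵥ c) (kC ℂ k *ᵥ b - kk ℂ k *ᵥ d) (kC ℂ k *ᵥ a + kk ℂ k *ᵥ c) := by
  ext i
  rcases i with (i | i) | (i | i) <;>
    simp [kKK, kipK, kvec, fromBlocks_mulVec, fromBlocks_transpose, Function.comp_def, neg_mulVec, sub_eq_add_neg]

lemma kε_big (j : ℕ) (hj : ¬ j < k + 2) : kε ℂ k j = 0 := by
  ext i; simp [kε]; omega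

lemma H_fa0 : kHH k *ᵥ kfa k 0 = kea k 0 := by
  simp only [kfa, kea, kHH_vec, mulVec_zero, kG0, add_zero]
lemma H_fb0 : kHH k *ᵥ kfb k 0 = keb k 0 := by
  simp only [kfb, keb, kHH_vec, mulVec_zero, kG0, add_zero]
lemma H_fa1 : kHH k *ᵥ kfa k 1 = (2:ℂ) • kea k 1 := by
  simp only [kfa, kea, kHH_vec, mulVec_zero, kG1, add_zero, kvec_smul, smul_zero]
lemma H_fb1 : kHH k *ᵥ kfb k 1 = (2:ℂ) • keb k 1 := by
  simp only [kfb, keb, kHH_vec, mulVec_zero, kG1, add_zero, kvec_smul, smul_zero]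
lemma H_ea0 : kHH k *ᵥ kea k 0 = kfa k 0 + kea k 0 + (2:ℂ) • kea k 1 := by
  simp only [kfa, kea, kHH_vec, mulVec_zero, kGt0, kh0, add_zero, zero_add, kvec_smul, kvec_add, smul_zero]
lemma H_eb0 : kHH k *ᵥ keb k 0 = kfb k 0 + keb k 0 + (2:ℂ) • keb k 1 := by
  simp only [kfb, keb, kHH_vec, mulVec_zero, kGt0, kh0, add_zero, zero_add, kvec_smul, kvec_add, smul_zero]
lemma H_ea1 : kHH k *ᵥ kea k 1 = (2:ℂ) • kfa k 1 + (2:ℂ) • kea k 0 + kea k 1 := by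
  simp only [kfa, kea, kHH_vec, mulVec_zero, kGt1, kh1, add_zero, zero_add, kvec_smul, kvec_add, smul_zero]
lemma H_eb1 : kHH k *ᵥ keb k 1 = (2:ℂ) • kfb k 1 + (2:ℂ) • keb k 0 + keb k 1 := by
  simp only [kfb, keb, kHH_vec, mulVec_zero, kGt1, kh1, add_zero, zero_add, kvec_smul, kvec_add, smul_zero]
lemma H_ea2 (j : ℕ) : kHH k *ᵥ kea k (j+2) = 0 := by
  by_cases hj : j + 2 < k + 2
  · simp only [kea, kHH_vec, mulVec_zero, kGt2 _ _ _ hj, kh2 _ _ _ hj, add_zero, kvec_zero]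
  · simp only [kea, kε_big k _ hj, kvec_zero, mulVec_zero]
lemma H_eb2 (j : ℕ) : kHH k *ᵥ keb k (j+2) = 0 := by
  by_cases hj : j + 2 < k + 2
  · simp only [keb, kHH_vec, mulVec_zero, kGt2 _ _ _ hj, kh2 _ _ _ hj, add_zero, kvec_zero]
  · simp only [keb, kε_big k _ hj, kvec_zero, mulVec_zero]
lemma K_fa0 : kKK k *ᵥ kfa k 0 = (-2:ℂ) • keb k 1 := by
  simp only [kfa, keb, kKK_vec, mulVec_zero, kC0, add_zero, sub_zero, kvec_smul, smul_zero]
lemma K_fb0 : kKK k *ᵥ kfb k 0 = (-2:ℂ) • kea k 1 := by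
  simp only [kfb, kea, kKK_vec, mulVec_zero, kC0, add_zero, sub_zero, kvec_smul, smul_zero]
lemma K_fa1 : kKK k *ᵥ kfa k 1 = keb k 0 := by
  simp only [kfa, keb, kKK_vec, mulVec_zero, kC1, add_zero, sub_zero]
lemma K_fb1 : kKK k *ᵥ kfb k 1 = kea k 0 := by
  simp only [kfb, kea, kKK_vec, mulVec_zero, kC1, add_zero, sub_zero]
lemma K_ea0 : kKK k *ᵥ kea k 0 = kfb k 1 + keb k 1 := by
  simp only [kfb, keb, kea, kKK_vec, mulVec_zero, kCt0, kk0, add_zero, zero_add, sub_zero, kvec_add]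
lemma K_eb0 : kKK k *ᵥ keb k 0 = kfa k 1 - kea k 1 := by
  simp only [kfa, keb, kea, kKK_vec, mulVec_zero, kCt0, kk0, add_zero, sub_zero, kvec_sub]
lemma K_ea1 : kKK k *ᵥ kea k 1 = (-2:ℂ) • kfb k 0 + keb k 2 - keb k 0 := by
  simp only [kfb, keb, kea, kKK_vec, mulVec_zero, kCt1, kk1 ℂ k 0 (by omega), add_zero, zero_add, sub_zero,
    kvec_add, kvec_sub, kvec_smul, smul_zero]
lemma K_eb1 : kKK k *ᵥ keb k 1 = (-2:ℂ) • kfa k 0 - kea k 2 + kea k 0 := by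
  simp only [kfa, keb, kea, kKK_vec, mulVec_zero, kCt1, kk1 ℂ k 0 (by omega), add_zero, zero_add, sub_zero,
    kvec_add, kvec_sub, kvec_smul, smul_zero]
  congr 1
  abel
lemma K_ea2 (j : ℕ) (hj : j + 2 < k + 2) : kKK k *ᵥ kea k (j+2) = keb k (j+3) - keb k (j+1) := by
  simp only [keb, kea, kKK_vec, mulVec_zero, kCt2 _ _ _ hj, kk1 ℂ k (j+1) hj, add_zero, zero_add, sub_zero,
    kvec_sub]
lemma K_eb2 (j : ℕ) (hj : j + 2 < k + 2) : kKK k *ᵥ keb k (j+2) = kea k (j+1) - kea k (j+3) := by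
  simp only [keb, kea, kKK_vec, mulVec_zero, kCt2 _ _ _ hj, kk1 ℂ k (j+1) hj, add_zero, zero_add, sub_zero,
    kvec_sub, zero_sub, neg_sub]

lemma kspan (U : Submodule ℂ (kι k → ℂ)) (h1 : kfa k 0 ∈ U) (h2 : kfa k 1 ∈ U) (h3 : kfb k 0 ∈ U)
    (h4 : kfb k 1 ∈ U) (h5 : ∀ j < k + 2, kea k j ∈ U) (h6 : ∀ j < k + 2, keb k j ∈ U) : U = ⊤ := by
  rw [eq_top_iff]
  intro v _
  rw [pi_eq_sum_univ' v]
  refine U.sum_mem fun i _ => U.smul_mem _ ?_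
  have key : ∀ w ∈ U, w = Pi.single i 1 → Pi.single i (1:ℂ) ∈ U := by
    intro w hw e; rwa [← e]
  rcases i with (i | i) | (i | i)
  · fin_cases i
    · refine key _ h1 ?_
      ext j; rcases j with (j | j) | (j | j) <;> simp [Pi.single_apply, kfa, kvec, kφ]
    · refine key _ h2 ?_
      ext j; rcases j with (j | j) | (j | j) <;> simp [Pi.single_apply, kfa, kvec, kφ, Fin.ext_iff]
  · fin_cases i
    · refine key _ h3 ?_
      ext j; rcases j with (j | j) | (j | j) <;> simp [Pi.single_apply, kfb, kvec, kφ]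
    · refine key _ h4 ?_
      ext j; rcases j with (j | j) | (j | j) <;> simp [Pi.single_apply, kfb, kvec, kφ, Fin.ext_iff]
  · refine key _ (h5 i i.2) ?_
    ext j; rcases j with (j | j) | (j | j) <;> simp [Pi.single_apply, kea, kvec, kε, Fin.ext_iff]
  · refine key _ (h6 i i.2) ?_
    ext j; rcases j with (j | j) | (j | j) <;> simp [Pi.single_apply, keb, kvec, kε, Fin.ext_iff]

def kva := (2:ℂ) • kfa k 0 + (-2:ℂ) • kfa k 1 + (2:ℂ) • kea k 0 + (-1:ℂ) • kea k 1
def kvb := (2:ℂ) • kfb k 0 + (-2:ℂ) • kfb k 1 + (2:ℂ) • keb k 0 + (-1:ℂ) • keb k 1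

lemma kgen (U : Submodule ℂ (kι k → ℂ)) (hv : kva k ∈ U) (hH : ∀ u ∈ U, kHH k *ᵥ u ∈ U)
    (hK : ∀ u ∈ U, kKK k *ᵥ u ∈ U) : U = ⊤ := by
  have b1 : (-1:ℂ) • kfb k 0 + (-4:ℂ) • kfb k 1 + (-3:ℂ) • keb k 0 ∈ U := by
    have := hH _ (hK _ hv)
    simp only [kva, mulVec_add, mulVec_sub, mulVec_smul, K_fa0, K_fa1, K_ea0, K_ea1, H_fb0, H_fb1, H_eb0, H_eb1, H_eb2 k 0] at this
    convert this using 1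
    module
  have a1 : (-4:ℂ) • kfa k 0 + (10:ℂ) • kfa k 1 + (6:ℂ) • kea k 0 + (-9:ℂ) • kea k 1 ∈ U := by
    have := hH _ (hK _ b1)
    simp only [mulVec_add, mulVec_sub, mulVec_smul, K_fb0, K_fb1, K_eb0, K_eb1, H_fa0, H_fa1, H_ea0, H_ea1, H_ea2 k 0] at this
    convert this using 1
    module
  have a2 : (6:ℂ) • kfa k 0 + (-18:ℂ) • kfa k 1 + (-16:ℂ) • kea k 0 + (23:ℂ) • kea k 1 ∈ U := by
    have := hH _ a1
    simp only [mulVec_add, mulVec_sub, mulVec_smul, H_fa0, H_fa1, H_ea0, H_ea1, H_ea2 k 0] at this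
    convert this using 1
    module
  have a3 : (-16:ℂ) • kfa k 0 + (46:ℂ) • kfa k 1 + (36:ℂ) • kea k 0 + (-45:ℂ) • kea k 1 ∈ U := by
    have := hH _ a2
    simp only [mulVec_add, mulVec_sub, mulVec_smul, H_fa0, H_fa1, H_ea0, H_ea1, H_ea2 k 0] at this
    convert this using 1
    module
  have comb : ∀ {p q r s : kι k → ℂ} (w x y z : ℂ), p ∈ U → q ∈ U → r ∈ U → s ∈ U →
      w • p + x • q + y • r + z • s ∈ U := fun w x y z hp hq hr hs =>
    U.add_mem (U.add_mem (U.add_mem (U.smul_mem _ hp) (U.smul_mem _ hq)) (U.smul_mem _ hr)) (U.smul_mem _ hs)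
  rw [kva] at hv
  have fa0 : kfa k 0 ∈ U := by
    convert comb (8/3) (13/3) (5/6) (-1/2) hv a1 a2 a3 using 1; module
  have fa1 : kfa k 1 ∈ U := by
    convert comb (17/12) (31/12) (7/12) (-1/4) hv a1 a2 a3 using 1; module
  have ea0 : kea k 0 ∈ U := by
    convert comb (-5/6) (-2) (-1/6) (1/3) hv a1 a2 a3 using 1; module
  have ea1 : kea k 1 ∈ U := by
    convert comb (-1/6) (-1/2) (1/6) (1/6) hv a1 a2 a3 using 1; module
  have c0 := hH _ (hK _ fa0)
  have c1 := hH _ (hK _ fa1)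
  have c2 := hH _ (hK _ ea0)
  have c3 := hH _ (hK _ ea1)
  simp only [mulVec_add, mulVec_sub, mulVec_smul, K_fa0, K_fa1, K_ea0, K_ea1, H_fb0, H_fb1, H_eb0, H_eb1, H_eb2 k 0] at c0 c1 c2 c3
  have fb0 : kfb k 0 ∈ U := by
    convert comb (-1/2) (3/2) (-1) (1/2) c0 c1 c2 c3 using 1; module
  have fb1 : kfb k 1 ∈ U := by
    convert comb (-3/8) (1/2) (-1/4) (1/2) c0 c1 c2 c3 using 1; module
  have eb0 : keb k 0 ∈ U := by
    convert comb 0 (-1/2) 0 (-1/2) c0 c1 c2 c3 using 1; module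
  have eb1 : keb k 1 ∈ U := by
    convert comb (1/4) 0 (1/2) 0 c0 c1 c2 c3 using 1; module
  have tail : ∀ j, j + 1 < k + 2 → (kea k j ∈ U ∧ keb k j ∈ U) ∧ (kea k (j+1) ∈ U ∧ keb k (j+1) ∈ U) := by
    intro j
    induction j with
    | zero => exact fun _ => ⟨⟨ea0, eb0⟩, ⟨ea1, eb1⟩⟩
    | succ j ih =>
      intro hj
      obtain ⟨h1, h2⟩ := ih (by omega)
      refine ⟨h2, ?_⟩
      rcases j with _ | j
      · constructor
        · have := hK _ eb1
          rw [K_eb1] at this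
          convert comb (-1) (-2) 1 0 this fa0 ea0 ea0 using 1; module
        · have := hK _ ea1
          rw [K_ea1] at this
          convert comb 1 2 1 0 this fb0 eb0 eb0 using 1; module
      · constructor
        · have := hK _ h2.2
          rw [K_eb2 _ _ (by omega)] at this
          have := U.sub_mem h1.1 this
          convert this using 1; abel
        · have := hK _ h2.1
          rw [K_ea2 _ _ (by omega)] at this
          have := U.add_mem h1.2 this
          convert this using 1; abel
  have tail' : ∀ j < k + 2, kea k j ∈ U ∧ keb k j ∈ U := by
    intro j hj
    rcases j with _ | j
    · exact ⟨ea0, eb0⟩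
    · exact (tail j hj).2
  exact kspan k U fa0 fa1 fb0 fb1 (fun j hj => (tail' j hj).1) (fun j hj => (tail' j hj).2)

lemma kvec_dot (a b c d a' b' c' d') :
    kvec k a b c d ⬝ᵥ kvec k a' b' c' d' = a ⬝ᵥ a' + b ⬝ᵥ b' + (c ⬝ᵥ c' + d ⬝ᵥ d') := by
  simp only [kvec, sumElim_dotProduct_sumElim]
lemma kφ_dot (i j : ℕ) (hi : i < 2) : kφ ℂ i ⬝ᵥ kφ ℂ j = if i = j then 1 else 0 := by
  rw [dotProduct, Finset.sum_eq_single ⟨i, hi⟩]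
  · simp [kφ]
  · intro b _ hb
    have : b.val ≠ i := fun h => hb (Fin.ext h)
    simp [kφ, this]
  · simp
lemma kε_dot (i j : ℕ) (hi : i < k + 2) : kε ℂ k i ⬝ᵥ kε ℂ k j = if i = j then 1 else 0 := by
  rw [dotProduct, Finset.sum_eq_single ⟨i, hi⟩]
  · simp [kε]
  · intro b _ hb
    have : b.val ≠ i := fun h => hb (Fin.ext h)
    simp [kε, this]
  · simp
lemma va_dot (a b c d) : kva k ⬝ᵥ kvec k a b c d =
    2 * (kφ ℂ 0 ⬝ᵥ a) - 2 * (kφ ℂ 1 ⬝ᵥ a) + 2 * (kε ℂ k 0 ⬝ᵥ c) - kε ℂ k 1 ⬝ᵥ c := by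
  simp only [kva, kfa, kea, add_dotProduct, smul_dotProduct, kvec_dot, zero_dotProduct, smul_eq_mul]
  ring
lemma vb_dot (a b c d) : kvb k ⬝ᵥ kvec k a b c d =
    2 * (kφ ℂ 0 ⬝ᵥ b) - 2 * (kφ ℂ 1 ⬝ᵥ b) + 2 * (kε ℂ k 0 ⬝ᵥ d) - kε ℂ k 1 ⬝ᵥ d := by
  simp only [kvb, kfb, keb, add_dotProduct, smul_dotProduct, kvec_dot, zero_dotProduct, smul_eq_mul]
  ring
lemma va_fa0 : kva k ⬝ᵥ kfa k 0 = 2 := by simp [kfa, va_dot, kφ]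
lemma va_fa1 : kva k ⬝ᵥ kfa k 1 = -2 := by simp [kfa, va_dot, kφ]
lemma va_ea0 : kva k ⬝ᵥ kea k 0 = 2 := by simp [kea, va_dot, kε_dot]
lemma va_ea1 : kva k ⬝ᵥ kea k 1 = -1 := by simp [kea, va_dot, kε_dot]
lemma va_ea2 (j : ℕ) : kva k ⬝ᵥ kea k (j+2) = 0 := by simp [kea, va_dot, kε_dot]
lemma va_fb (j : ℕ) : kva k ⬝ᵥ kfb k j = 0 := by simp [kfb, va_dot]
lemma va_eb (j : ℕ) : kva k ⬝ᵥ keb k j = 0 := by simp [keb, va_dot]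
lemma vb_fb0 : kvb k ⬝ᵥ kfb k 0 = 2 := by simp [kfb, vb_dot, kφ]
lemma vb_fb1 : kvb k ⬝ᵥ kfb k 1 = -2 := by simp [kfb, vb_dot, kφ]
lemma vb_eb0 : kvb k ⬝ᵥ keb k 0 = 2 := by simp [keb, vb_dot, kε_dot]
lemma vb_eb1 : kvb k ⬝ᵥ keb k 1 = -1 := by simp [keb, vb_dot, kε_dot]
lemma vb_eb2 (j : ℕ) : kvb k ⬝ᵥ keb k (j+2) = 0 := by simp [keb, vb_dot, kε_dot]
lemma vb_fa (j : ℕ) : kvb k ⬝ᵥ kfa k j = 0 := by simp [kfa, vb_dot]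
lemma vb_ea (j : ℕ) : kvb k ⬝ᵥ kea k j = 0 := by simp [kea, vb_dot]

def kPP : Matrix (kι k) (kι k) ℂ :=
  kHH k * (kHH k * (kHH k * kHH k)) - kHH k * (kHH k * kHH k) - (9:ℂ) • (kHH k * kHH k) - (4:ℂ) • kHH k

lemma kPP_eq : kPP k = -(vecMulVec (kva k) (kva k) + vecMulVec (kvb k) (kvb k)) := by
  have h : LinearMap.eqLocus (mulVecLin (kPP k))
      (mulVecLin (-(vecMulVec (kva k) (kva k) + vecMulVec (kvb k) (kvb k)))) = ⊤ := by
    have tl : ∀ w, kHH k *ᵥ w = 0 → kva k ⬝ᵥ w = 0 → kvb k ⬝ᵥ w = 0 → w ∈ LinearMap.eqLocus (mulVecLin (kPP k))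
      (mulVecLin (-(vecMulVec (kva k) (kva k) + vecMulVec (kvb k) (kvb k)))) := by
      intro w h1 h2 h3
      simp only [LinearMap.mem_eqLocus, mulVecLin_apply, kPP, sub_mulVec, smul_mulVec, ← mulVec_mulVec, neg_mulVec,
        add_mulVec, vecMulVec_mulVec, h1, h2, h3, mulVec_zero]
      simp
    apply kspan
    iterate 4
      simp only [LinearMap.mem_eqLocus, mulVecLin_apply, kPP, sub_mulVec, smul_mulVec, ← mulVec_mulVec, neg_mulVec,
        add_mulVec, vecMulVec_mulVec, mulVec_add, mulVec_smul, H_fa0, H_fa1, H_ea0, H_ea1, H_fb0, H_fb1, H_eb0, H_eb1,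
        va_fa0, va_fa1, va_fb, vb_fa, vb_fb0, vb_fb1, op_smul_eq_smul]
      simp only [kva, kvb]
      module
    · intro j hj
      rcases j with _ | _ | j
      iterate 2
        simp only [LinearMap.mem_eqLocus, mulVecLin_apply, kPP, sub_mulVec, smul_mulVec, ← mulVec_mulVec, neg_mulVec,
          add_mulVec, vecMulVec_mulVec, mulVec_add, mulVec_smul, H_fa0, H_fa1, H_ea0, H_ea1, H_fb0, H_fb1, H_eb0, H_eb1,
          va_ea0, va_ea1, va_eb, vb_ea, vb_eb0, vb_eb1, op_smul_eq_smul, zero_add]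
        simp only [kva, kvb]
        module
      · exact tl _ (H_ea2 k j) (va_ea2 k j) (vb_ea k _)
    · intro j hj
      rcases j with _ | _ | j
      iterate 2
        simp only [LinearMap.mem_eqLocus, mulVecLin_apply, kPP, sub_mulVec, smul_mulVec, ← mulVec_mulVec, neg_mulVec,
          add_mulVec, vecMulVec_mulVec, mulVec_add, mulVec_smul, H_fa0, H_fa1, H_ea0, H_ea1, H_fb0, H_fb1, H_eb0, H_eb1,
          va_ea0, va_ea1, va_eb, vb_ea, vb_eb0, vb_eb1, op_smul_eq_smul, zero_add]
        simp only [kva, kvb]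
        module
      · exact tl _ (H_eb2 k j) (va_eb k _) (vb_eb2 k j)
  have h' := LinearMap.eqLocus_eq_top.mp h
  ext i j
  have h3 := congrFun (LinearMap.congr_fun h' (Pi.single j 1)) i
  simpa only [mulVecLin_apply, mulVec_single_one, col_apply] using h3

lemma kKHK_va : kKK k *ᵥ (kHH k *ᵥ (kKK k *ᵥ kva k)) =
    (-3:ℂ) • kfa k 1 + (-4:ℂ) • kea k 0 + (5:ℂ) • kea k 1 := by
  simp only [kva, mulVec_add, mulVec_sub, mulVec_smul, K_fa0, K_fa1, K_ea0, K_ea1, K_fb0, K_fb1, K_eb0, K_eb1,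
    H_fb0, H_fb1, H_eb0, H_eb1, H_eb2 k 0, mulVec_zero]
  module
lemma kKHK_vb : kKK k *ᵥ (kHH k *ᵥ (kKK k *ᵥ kvb k)) =
    (16:ℂ) • kfb k 0 + (-13:ℂ) • kfb k 1 + (-4:ℂ) • keb k 0 + (-7:ℂ) • keb k 1 + (-8:ℂ) • keb k 2 := by
  simp only [kvb, mulVec_add, mulVec_sub, mulVec_smul, K_fa0, K_fa1, K_ea0, K_ea1, K_fb0, K_fb1, K_eb0, K_eb1,
    H_fa0, H_fa1, H_ea0, H_ea1, H_ea2 k 0, mulVec_zero]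
  module

lemma kPKHKP : kPP k * (kKK k * (kHH k * (kKK k * kPP k))) =
    (-7:ℂ) • vecMulVec (kva k) (kva k) + (57:ℂ) • vecMulVec (kvb k) (kvb k) := by
  rw [kPP_eq]
  simp only [Matrix.mul_neg, Matrix.neg_mul, neg_neg, Matrix.mul_add, mul_vecMulVec, kKHK_va, kKHK_vb]
  simp only [neg_mulVec, mulVec_neg, neg_neg, add_mulVec, vecMulVec_mulVec, dotProduct_add, dotProduct_smul,
    va_fa1, va_ea0, va_ea1, va_fb, va_eb, vb_fb0, vb_fb1, vb_eb0, vb_eb1, vb_eb2 k 0, vb_fa, vb_ea, smul_eq_mul,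
    op_smul_eq_smul, neg_vecMulVec, add_vecMulVec, smul_vecMulVec]
  module

lemma kipH_symm {R m r : Type*} [CommRing R] (G : Matrix m r R) (h : Matrix m m R) (hh : hᵀ = h) :
    (kipH G h)ᵀ = kipH G h := by
  simp [kipH, fromBlocks_transpose, hh]
lemma kipK_symm {R m r : Type*} [CommRing R] (C : Matrix m r R) (h : Matrix m m R) (hh : hᵀ = -h) :
    (kipK C h)ᵀ = kipK C h := by
  simp [kipK, fromBlocks_transpose, hh]

lemma k_adjoin : Algebra.adjoin ℂ {kHH k, kKK k} = ⊤ := by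
  refine kip_adjoin_top _ _ (kipH_symm _ _ (kh_symm ℂ k)) (kipK_symm _ _ (kk_symm ℂ k)) (kva k) ?_ (kgen k)
  set A := Algebra.adjoin ℂ {kHH k, kKK k}
  have hHA : kHH k ∈ A := Algebra.subset_adjoin (by simp)
  have hKA : kKK k ∈ A := Algebra.subset_adjoin (by simp)
  have h2 := A.mul_mem hHA hHA
  have h3 := A.mul_mem hHA h2
  have h4 := A.mul_mem hHA h3
  have hP : kPP k ∈ A := A.sub_mem (A.sub_mem (A.sub_mem h4 h3) (A.smul_mem h2 _)) (A.smul_mem hHA _)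
  have hQ := A.mul_mem hP (A.mul_mem hKA (A.mul_mem hHA (A.mul_mem hKA hP)))
  have := A.add_mem (A.smul_mem hP (-57/64)) (A.smul_mem hQ (-1/64))
  rw [kPKHKP, kPP_eq] at this
  convert this using 1
  module
end vectors

theorem kippenhahn_counterexamples_all_even_sizes_ge_eight
    (n : ℕ) (hn : 4 ≤ n) :
    ∃ H K : Matrix (Fin (2 * n)) (Fin (2 * n)) ℝ,
      Hᵀ = H ∧ Kᵀ = K ∧
      (∀ x y : ℝ, ∃ g : Polynomial ℝ, g.Monic ∧ (x • H + y • K).charpoly = g ^ 2) ∧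
      Algebra.adjoin ℂ {H.map (algebraMap ℝ ℂ), K.map (algebraMap ℝ ℂ)} = ⊤ := by
  obtain ⟨k, rfl⟩ : ∃ k, n = k + 2 + 2 := ⟨n - 4, by omega⟩
  let e : kι k ≃ Fin (2 * (k + 2 + 2)) := Fintype.equivOfCardEq (by simp; omega)
  let H := kipH (kG ℝ k) (kh ℝ k)
  let K := kipK (kC ℝ k) (kk ℝ k)
  have hH : Hᵀ = H := kipH_symm _ _ (kh_symm ℝ k)
  have hK : Kᵀ = K := kipK_symm _ _ (kk_symm ℝ k)
  have mG : (kG ℝ k).map (algebraMap ℝ ℂ) = kG ℂ k := by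
    ext1 i j; simp only [kG, map_apply, of_apply]; split_ifs <;> simp
  have mC : (kC ℝ k).map (algebraMap ℝ ℂ) = kC ℂ k := by
    ext1 i j; simp only [kC, map_apply, of_apply]; split_ifs <;> simp
  have mh : (kh ℝ k).map (algebraMap ℝ ℂ) = kh ℂ k := by
    ext1 i j; simp only [kh, map_apply, of_apply]; split_ifs <;> simp
  have mk : (kk ℝ k).map (algebraMap ℝ ℂ) = kk ℂ k := by
    ext1 i j; simp only [kk, map_apply, of_apply]; split_ifs <;> simp
  have z1 : ∀ (a b : Type) , (0 : Matrix a b ℝ).map (algebraMap ℝ ℂ) = 0 := by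
    intro a b; ext1 i j; simp
  have mH : H.map (algebraMap ℝ ℂ) = kHH k := by
    simp only [H, kHH, kipH, fromBlocks_map, transpose_map, mG, mh, z1]
  have mK : K.map (algebraMap ℝ ℂ) = kKK k := by
    have : (-(kk ℝ k)).map (algebraMap ℝ ℂ) = -kk ℂ k := by
      rw [← mk]; ext1 i j; simp
    simp only [K, kKK, kipK, fromBlocks_map, transpose_map, mC, mk, this, z1]
  refine ⟨reindex e e H, reindex e e K, ?_, ?_, ?_, ?_⟩
  · rw [transpose_reindex, hH]
  · rw [transpose_reindex, hK]
  · intro x y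
    have h1 : x • reindex e e H + y • reindex e e K = reindex e e (x • H + y • K) := by
      ext i j; simp
    rw [h1, charpoly_reindex]
    obtain ⟨q, hq⟩ := kip_sq_complex (kG ℂ k) (kC ℂ k) (kh ℂ k) (kk ℂ k) (kh_symm ℂ k) (kk_symm ℂ k)
      (kG_C ℂ k) (kG_C' ℂ k) x y
    refine kip_real_sq _ (charpoly_monic _) q ?_
    rw [← hq, ← charpoly_map]
    congr 1
    change _ = (x:ℂ) • kHH k + (y:ℂ) • kKK k
    rw [← mH, ← mK]
    ext1 i j
    simp
  · have h2 := k_adjoin k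
    have h3 : ∀ M : Matrix (kι k) (kι k) ℝ, (reindex e e M).map (algebraMap ℝ ℂ)
        = reindexAlgEquiv ℂ ℂ e (M.map (algebraMap ℝ ℂ)) := by
      intro M; ext i j; simp
    rw [h3, h3, mH, mK]
    have h4 := AlgHom.map_adjoin (reindexAlgEquiv ℂ ℂ e).toAlgHom {kHH k, kKK k}
    rw [h2, Set.image_pair] at h4
    refine Eq.trans h4.symm ?_
    rw [Algebra.map_top, AlgHom.range_eq_top]
    exact (reindexAlgEquiv ℂ ℂ e).surjective
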